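/- Let D be a division ring with center K. Then there is exactly one rank function S on the simple D-ring D tensor_K M_K, and the subring D tensor_K (lim_n M_{2^n}(K)), which is isomorphic to lim_n M_{2^n}(D), is dense in D tensor_K M_K with respect to the S-metric. -/

import Mathlib

open scoped TensorProduct Kronecker

noncomputable section

namespace AraClaramunt

/-! ### Pseudo-rank functions and rank metric notions -/

/-- A pseudo-rank function on a unital ring. -/
structure IsPseudoRankFunction {R : Type*} [Ring R] (N : R → ℝ) : Prop where
  nonneg : ∀ x : R, 0 ≤ N x
  le_one : ∀ x : R, N x ≤ 1
  map_one : N 1 = 1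
  subadditive : ∀ a b : R, N (a + b) ≤ N a + N b
  mul_le_left : ∀ a b : R, N (a * b) ≤ N a
  mul_le_right : ∀ a b : R, N (a * b) ≤ N b
  add_of_orthogonal : ∀ e f : R, IsIdempotentElem e → IsIdempotentElem f →
    e * f = 0 → f * e = 0 → N (e + f) = N e + N f

/-- A rank function is a faithful pseudo-rank function. -/
def IsRankFunction {R : Type*} [Ring R] (N : R → ℝ) : Prop :=
  IsPseudoRankFunction N ∧ ∀ x : R, N x = 0 → x = 0

/-- Cauchy sequence for the pseudo-metric `d(x,y) = N (x - y)`. -/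
def RankCauchy {R : Type*} [Ring R] (N : R → ℝ) (u : ℕ → R) : Prop :=
  ∀ ε : ℝ, 0 < ε → ∃ n₀ : ℕ, ∀ m n : ℕ, n₀ ≤ m → n₀ ≤ n → N (u m - u n) < ε

/-- Convergence for the pseudo-metric `d(x,y) = N (x - y)`. -/
def RankTendsto {R : Type*} [Ring R] (N : R → ℝ) (u : ℕ → R) (x : R) : Prop :=
  ∀ ε : ℝ, 0 < ε → ∃ n₀ : ℕ, ∀ n : ℕ, n₀ ≤ n → N (u n - x) < ε

/-- Completeness with respect to the pseudo-metric `d(x,y) = N (x - y)`. -/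
def RankComplete {R : Type*} [Ring R] (N : R → ℝ) : Prop :=
  ∀ u : ℕ → R, RankCauchy N u → ∃ x : R, RankTendsto N u x

/-- Density of a subset with respect to the pseudo-metric `d(x,y) = N (x - y)`. -/
def RankDense {R : Type*} [Ring R] (N : R → ℝ) (S : Set R) : Prop :=
  ∀ x : R, ∀ ε : ℝ, 0 < ε → ∃ y ∈ S, N (x - y) < ε

/-- von Neumann regularity. -/
def VNRegular (R : Type*) [Ring R] : Prop :=
  ∀ x : R, ∃ y : R, x = x * y * x

/-- A continuous factor: a simple, von Neumann regular, right and left self-injective ring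
admitting a rank function whose image is all of `[0,1]`. -/
def IsContinuousFactor (R : Type*) [Ring R] : Prop :=
  IsSimpleRing R ∧ VNRegular R ∧ Module.Injective R R ∧ Module.Injective Rᵐᵒᵖ Rᵐᵒᵖ ∧
    ∃ N : R → ℝ, IsRankFunction N ∧ Set.range N = Set.Icc (0 : ℝ) 1

/-- An extremal pseudo-rank function: an extreme point of the convex set of all
pseudo-rank functions. -/
def IsExtremalPseudoRankFunction {R : Type*} [Ring R] (N : R → ℝ) : Prop :=
  N ∈ Set.extremePoints ℝ {S : R → ℝ | IsPseudoRankFunction S}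

/-! ### Matricial and ultramatricial algebras -/

/-- A matricial `K`-algebra. -/
def IsMatricialAlgebra (K : Type*) [Field K] (A : Type*) [Ring A] [Algebra K A] : Prop :=
  ∃ (k : ℕ) (n : Fin (k + 1) → ℕ), (∀ i, 0 < n i) ∧
    Nonempty (A ≃ₐ[K] ((i : Fin (k + 1)) → Matrix (Fin (n i)) (Fin (n i)) K))

/-- An ultramatricial `K`-algebra: the increasing union of matricial subalgebras. -/
def IsUltramatricialAlgebra (K : Type*) [Field K] (B : Type*) [Ring B] [Algebra K B] : Prop :=
  ∃ C : ℕ → Subalgebra K B, (∀ n, C n ≤ C (n + 1)) ∧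
    (∀ n, IsMatricialAlgebra K (C n)) ∧ (∀ b : B, ∃ n, b ∈ C n)

/-- `Q`, with rank function `N`, is the rank-metric completion of a direct limit of the matrix
algebras `M_{p n}(K)`: it is complete and carries a dense increasing tower of unital subalgebras
isomorphic to `M_{p n}(K)`. -/
def IsMatrixTowerCompletion (K : Type*) [Field K] (Q : Type*) [Ring Q] [Algebra K Q]
    (N : Q → ℝ) (p : ℕ → ℕ) : Prop :=
  IsRankFunction N ∧ RankComplete N ∧
    ∃ A : ℕ → Subalgebra K Q, (∀ n, A n ≤ A (n + 1)) ∧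
      (∀ n, Nonempty ((A n) ≃ₐ[K] Matrix (Fin (p n)) (Fin (p n)) K)) ∧
      RankDense N (⋃ n, (A n : Set Q))

/-- `Q` is (a copy of) von Neumann's continuous factor `M_K`, the completion of
`lim_n M_{2^n}(K)` with respect to its unique rank function. -/
def IsMK (K : Type*) [Field K] (Q : Type*) [Ring Q] [Algebra K Q] (N : Q → ℝ) : Prop :=
  IsMatrixTowerCompletion K Q N (fun n => 2 ^ n)

/-- The canonical block-diagonal unital embedding `M_a(K) → M_b(K)`, `z ↦ z ⊗ 1_g`,
where `b = a * g`. -/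
def blockEmbedFun (K : Type*) [Semiring K] {a : ℕ} (g b : ℕ) (h : a * g = b)
    (z : Matrix (Fin a) (Fin a) K) : Matrix (Fin b) (Fin b) K :=
  Matrix.reindex (finProdFinEquiv.trans (finCongr h)) (finProdFinEquiv.trans (finCongr h))
    (z ⊗ₖ (1 : Matrix (Fin g) (Fin g) K))

end AraClaramunt
namespace AraClaramunt

/-! ### Rank of matrices over division rings -/

section RankMatrix

variable {F : Type*} [DivisionRing F] {n : ℕ}

/-- The linear map `v ↦ v x` of row vectors. -/
def rowMap (x : Matrix (Fin n) (Fin n) F) : (Fin n → F) →ₗ[F] (Fin n → F) :=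
  Matrix.toLinearMapRight' x

lemma rowMap_mul (x y : Matrix (Fin n) (Fin n) F) : rowMap (x * y) = rowMap y ∘ₗ rowMap x :=
  Matrix.toLinearMapRight'_mul x y

lemma rowMap_add (x y : Matrix (Fin n) (Fin n) F) : rowMap (x + y) = rowMap x + rowMap y :=
  map_add Matrix.toLinearMapRight' x y

lemma rowMap_one : rowMap (1 : Matrix (Fin n) (Fin n) F) = LinearMap.id :=
  Matrix.toLinearMapRight'_one

lemma rowMap_zero : rowMap (0 : Matrix (Fin n) (Fin n) F) = 0 :=
  map_zero Matrix.toLinearMapRight'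

lemma rowMap_injective : Function.Injective (rowMap (F := F) (n := n)) :=
  Matrix.toLinearMapRight'.injective

lemma rowMap_surjective : Function.Surjective (rowMap (F := F) (n := n)) :=
  Matrix.toLinearMapRight'.surjective

/-- Row rank of a square matrix over a division ring. -/
def rk (x : Matrix (Fin n) (Fin n) F) : ℕ :=
  Module.finrank F (LinearMap.range (rowMap x))

lemma rk_zero : rk (0 : Matrix (Fin n) (Fin n) F) = 0 := by
  simp [rk, rowMap_zero]

lemma rk_one : rk (1 : Matrix (Fin n) (Fin n) F) = n := by
  rw [rk, rowMap_one, LinearMap.range_id, finrank_top, Module.finrank_fin_fun]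

lemma rk_mul_le_left (a b : Matrix (Fin n) (Fin n) F) : rk (a * b) ≤ rk a := by
  unfold rk
  rw [rowMap_mul, LinearMap.range_comp]
  exact Submodule.finrank_map_le _ _

lemma rk_mul_le_right (a b : Matrix (Fin n) (Fin n) F) : rk (a * b) ≤ rk b := by
  unfold rk
  rw [rowMap_mul]
  exact Submodule.finrank_mono (LinearMap.range_comp_le_range _ _)

lemma rk_add_le (a b : Matrix (Fin n) (Fin n) F) : rk (a + b) ≤ rk a + rk b := by
  unfold rk
  rw [rowMap_add]
  refine le_trans (Submodule.finrank_mono (t := LinearMap.range (rowMap a) ⊔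
    LinearMap.range (rowMap b)) ?_) (Submodule.finrank_add_le_finrank_add_finrank _ _)
  rintro _ ⟨v, rfl⟩
  exact Submodule.add_mem_sup ⟨v, rfl⟩ ⟨v, rfl⟩

lemma finrank_map_add {V W : Type*} [AddCommGroup V] [Module F V] [AddCommGroup W] [Module F W]
    [FiniteDimensional F V] (f : V →ₗ[F] W) (p : Submodule F V) :
    Module.finrank F (p.map f) + Module.finrank F (p ⊓ LinearMap.ker f : Submodule F V)
      = Module.finrank F p := by
  have h := LinearMap.finrank_range_add_finrank_ker (f.domRestrict p)
  rw [LinearMap.range_domRestrict] at h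
  rw [← h]
  congr 1
  rw [← Submodule.map_comap_subtype, Submodule.finrank_map_subtype_eq]
  rfl

/-- Frobenius' inequality. -/
lemma rk_frobenius (a b c : Matrix (Fin n) (Fin n) F) :
    rk (a * b) + rk (b * c) ≤ rk b + rk (a * b * c) := by
  unfold rk
  rw [rowMap_mul (a * b) c, rowMap_mul a b, rowMap_mul b c]
  rw [LinearMap.range_comp, LinearMap.range_comp, LinearMap.range_comp, LinearMap.range_comp]
  have h1 := finrank_map_add (rowMap c) (LinearMap.range (rowMap b))
  have h2 := finrank_map_add (rowMap c) (Submodule.map (rowMap b) (LinearMap.range (rowMap a)))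
  have h3 : Module.finrank F
      ((Submodule.map (rowMap b) (LinearMap.range (rowMap a))) ⊓
        LinearMap.ker (rowMap c) : Submodule F _) ≤
      Module.finrank F (LinearMap.range (rowMap b) ⊓ LinearMap.ker (rowMap c) : Submodule F _) :=
    Submodule.finrank_mono (inf_le_inf_right _ LinearMap.map_le_range)
  omega

lemma exists_mul_of_rk_le {x y : Matrix (Fin n) (Fin n) F} (h : rk x ≤ rk y) :
    ∃ p q, x = p * y * q := by
  obtain ⟨j, hj⟩ : ∃ j : LinearMap.range (rowMap x) →ₗ[F] LinearMap.range (rowMap y),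
      Function.Injective j := (_root_.finrank_le_iff_exists_linearMap).1 h
  obtain ⟨l, hl⟩ := j.exists_leftInverse_of_injective (LinearMap.ker_eq_bot.2 hj)
  obtain ⟨s, hs⟩ := (rowMap y).rangeRestrict.exists_rightInverse_of_surjective
    (LinearMap.range_rangeRestrict _)
  obtain ⟨t, ht⟩ := (LinearMap.range (rowMap y)).subtype.exists_leftInverse_of_injective
    (Submodule.ker_subtype _)
  obtain ⟨p, hp⟩ := rowMap_surjective (s ∘ₗ j ∘ₗ (rowMap x).rangeRestrict)
  obtain ⟨q, hq⟩ := rowMap_surjective ((LinearMap.range (rowMap x)).subtype ∘ₗ l ∘ₗ t)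
  refine ⟨p, q, rowMap_injective ?_⟩
  rw [rowMap_mul, rowMap_mul, hp, hq]
  refine LinearMap.ext fun v => ?_
  have h1 : ∀ w, rowMap y (s w) = w := fun w => congrArg Subtype.val (LinearMap.congr_fun hs w)
  have h2 : ∀ w : LinearMap.range (rowMap y), t w = w := fun w => LinearMap.congr_fun ht w
  have h3 : ∀ w, l (j w) = w := fun w => LinearMap.congr_fun hl w
  simp [h1, h2, h3]

lemma exists_regular (x : Matrix (Fin n) (Fin n) F) : ∃ y, x = x * y * x := by
  obtain ⟨s, hs⟩ := (rowMap x).rangeRestrict.exists_rightInverse_of_surjective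
    (LinearMap.range_rangeRestrict _)
  obtain ⟨t, ht⟩ := (LinearMap.range (rowMap x)).subtype.exists_leftInverse_of_injective
    (Submodule.ker_subtype _)
  obtain ⟨p, hp⟩ := rowMap_surjective (s ∘ₗ t)
  refine ⟨p, rowMap_injective ?_⟩
  rw [rowMap_mul, rowMap_mul, hp]
  refine LinearMap.ext fun v => ?_
  have h1 : ∀ w, rowMap x (s w) = w := fun w => congrArg Subtype.val (LinearMap.congr_fun hs w)
  have h2 : ∀ w : LinearMap.range (rowMap x), t w = w := fun w => LinearMap.congr_fun ht w
  have h3 : t (rowMap x v) = (rowMap x).rangeRestrict v := h2 ((rowMap x).rangeRestrict v)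
  simp [h1, h3]

end RankMatrix

/-! ### Generalities on pseudo-rank functions -/

lemma IsPseudoRankFunction.map_zero {R : Type*} [Ring R] {N : R → ℝ}
    (h : IsPseudoRankFunction N) : N 0 = 0 := by
  have := h.add_of_orthogonal 0 0 (by simp [IsIdempotentElem]) (by simp [IsIdempotentElem])
    (by simp) (by simp)
  rw [add_zero] at this
  linarith

lemma IsPseudoRankFunction.map_neg {R : Type*} [Ring R] {N : R → ℝ}
    (h : IsPseudoRankFunction N) (x : R) : N (-x) = N x := by
  apply le_antisymm
  · simpa using h.mul_le_right (-1) x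
  · simpa using h.mul_le_right (-1) (-x)

lemma IsPseudoRankFunction.map_sub_comm {R : Type*} [Ring R] {N : R → ℝ}
    (h : IsPseudoRankFunction N) (x y : R) : N (x - y) = N (y - x) := by
  rw [← h.map_neg, neg_sub]

lemma IsPseudoRankFunction.sub_le {R : Type*} [Ring R] {N : R → ℝ}
    (h : IsPseudoRankFunction N) (x y : R) : N (x - y) ≤ N x + N y := by
  rw [sub_eq_add_neg, ← h.map_neg y]
  exact h.subadditive _ _

lemma IsPseudoRankFunction.dist_triangle {R : Type*} [Ring R] {N : R → ℝ}
    (h : IsPseudoRankFunction N) (x y z : R) : N (x - z) ≤ N (x - y) + N (y - z) := by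
  have := h.subadditive (x - y) (y - z)
  rwa [sub_add_sub_cancel] at this

lemma IsPseudoRankFunction.abs_sub_le {R : Type*} [Ring R] {N : R → ℝ}
    (h : IsPseudoRankFunction N) (x y : R) : |N x - N y| ≤ N (x - y) := by
  rw [abs_le]
  have h1 := h.subadditive (x - y) y
  have h2 := h.subadditive (y - x) x
  rw [h.map_sub_comm y x] at h2
  rw [sub_add_cancel] at h1 h2
  constructor <;> linarith

lemma IsPseudoRankFunction.comp {R T : Type*} [Ring R] [Ring T] {N : T → ℝ}
    (h : IsPseudoRankFunction N) (f : R →+* T) : IsPseudoRankFunction (fun x => N (f x)) where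
  nonneg x := h.nonneg _
  le_one x := h.le_one _
  map_one := by rw [_root_.map_one, h.map_one]
  subadditive a b := by rw [map_add]; exact h.subadditive _ _
  mul_le_left a b := by rw [map_mul]; exact h.mul_le_left _ _
  mul_le_right a b := by rw [map_mul]; exact h.mul_le_right _ _
  add_of_orthogonal e g he hg h1 h2 := by
    rw [map_add]
    exact h.add_of_orthogonal _ _ (he.map f) (hg.map f) (by rw [← map_mul, h1, _root_.map_zero])
      (by rw [← map_mul, h2, _root_.map_zero])

/-- Pseudo-rank functions from Frobenius' inequality. -/
lemma IsPseudoRankFunction.of_frobenius {R : Type*} [Ring R] {N : R → ℝ}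
    (h0 : ∀ x, 0 ≤ N x) (hz : N 0 = 0) (h1 : N 1 = 1) (ha : ∀ a b, N (a + b) ≤ N a + N b)
    (hl : ∀ a b, N (a * b) ≤ N a) (hr : ∀ a b, N (a * b) ≤ N b)
    (hf : ∀ a b c, N (a * b) + N (b * c) ≤ N b + N (a * b * c)) : IsPseudoRankFunction N where
  nonneg := h0
  le_one x := by rw [← h1]; simpa using hl 1 x
  map_one := h1
  subadditive := ha
  mul_le_left := hl
  mul_le_right := hr
  add_of_orthogonal e f he hg hef hfe := by
    apply le_antisymm (ha _ _)
    have := hf e (e + f) f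
    have e1 : e * (e + f) = e := by rw [mul_add, he.eq, hef, add_zero]
    have e2 : (e + f) * f = f := by rw [add_mul, hg.eq, hef, zero_add]
    rw [e1, e2, hef, hz] at this
    linarith

section Unique

variable {F : Type*} [DivisionRing F] {n : ℕ}

lemma isPseudoRankFunction_rk (hn : n ≠ 0) :
    IsPseudoRankFunction (fun x : Matrix (Fin n) (Fin n) F => (rk x : ℝ) / n) := by
  have hn' : (0 : ℝ) < n := by positivity
  apply IsPseudoRankFunction.of_frobenius
  · intro x; positivity
  · simp [rk_zero]
  · simp [rk_one, hn]
  · intro a b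
    rw [← add_div]
    gcongr
    exact_mod_cast rk_add_le a b
  · intro a b
    gcongr
    exact rk_mul_le_left a b
  · intro a b
    gcongr
    exact rk_mul_le_right a b
  · intro a b c
    rw [← add_div, ← add_div]
    apply div_le_div_of_nonneg_right _ hn'.le
    exact_mod_cast rk_frobenius a b c

/-- diagonal idempotent -/
def diagIdem (s : Finset (Fin n)) : Matrix (Fin n) (Fin n) F :=
  ∑ i ∈ s, Matrix.single i i 1

lemma single_mul_diagIdem {s : Finset (Fin n)} {i : Fin n} (hi : i ∉ s) :
    Matrix.single i i (1 : F) * diagIdem s = 0 := by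
  rw [diagIdem, Finset.mul_sum]
  refine Finset.sum_eq_zero fun j hj => ?_
  have hij : i ≠ j := fun h => hi (h ▸ hj)
  simp [hij]

lemma diagIdem_mul_single {s : Finset (Fin n)} {i : Fin n} (hi : i ∉ s) :
    diagIdem s * Matrix.single i i (1 : F) = 0 := by
  rw [diagIdem, Finset.sum_mul]
  refine Finset.sum_eq_zero fun j hj => ?_
  have hij : i ≠ j := fun h => hi (h ▸ hj)
  simp [Ne.symm hij]

lemma isIdempotentElem_single (i : Fin n) :
    IsIdempotentElem (Matrix.single i i (1 : F)) := by
  simp [IsIdempotentElem]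

lemma isIdempotentElem_diagIdem (s : Finset (Fin n)) :
    IsIdempotentElem (diagIdem s : Matrix (Fin n) (Fin n) F) := by
  induction s using Finset.induction_on with
  | empty => simp [diagIdem, IsIdempotentElem]
  | insert i s hi ih =>
    have : (diagIdem (insert i s) : Matrix (Fin n) (Fin n) F) =
      Matrix.single i i 1 + diagIdem s := by rw [diagIdem, Finset.sum_insert hi]; rfl
    rw [this, IsIdempotentElem, add_mul, mul_add, mul_add, single_mul_diagIdem hi,
      diagIdem_mul_single hi, ih.eq, (isIdempotentElem_single i).eq]
    simp

lemma diagIdem_univ : (diagIdem Finset.univ : Matrix (Fin n) (Fin n) F) = 1 := by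
  ext i j
  rw [diagIdem, Matrix.sum_apply, Matrix.one_apply]
  simp only [Matrix.single_apply]
  rcases eq_or_ne i j with rfl | hij
  · simp
  · rw [if_neg hij]
    refine Finset.sum_eq_zero fun k _ => if_neg ?_
    rintro ⟨rfl, rfl⟩
    exact hij rfl

lemma pseudoRank_diagIdem (hn : n ≠ 0) {N : Matrix (Fin n) (Fin n) F → ℝ}
    (h : IsPseudoRankFunction N) (s : Finset (Fin n)) : N (diagIdem s) = (s.card : ℝ) / n := by
  have hle : ∀ i j : Fin n, N (Matrix.single i i 1) ≤ N (Matrix.single j j 1) := by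
    intro i j
    have : (Matrix.single i i 1 : Matrix (Fin n) (Fin n) F) =
        Matrix.single i j 1 * Matrix.single j j 1 * Matrix.single j i 1 := by simp
    rw [this]
    exact (h.mul_le_left _ _).trans (h.mul_le_right _ _)
  have heq : ∀ i j : Fin n, N (Matrix.single i i 1) = N (Matrix.single j j 1) :=
    fun i j => le_antisymm (hle i j) (hle j i)
  let i0 : Fin n := ⟨0, Nat.pos_of_ne_zero hn⟩
  have key : ∀ s : Finset (Fin n), N (diagIdem s) = s.card * N (Matrix.single i0 i0 1) := by
    intro s
    induction s using Finset.induction_on with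
    | empty => simp [diagIdem, h.map_zero]
    | insert i s hi ih =>
      have : (diagIdem (insert i s) : Matrix (Fin n) (Fin n) F) =
        Matrix.single i i 1 + diagIdem s := by rw [diagIdem, Finset.sum_insert hi]; rfl
      rw [this, h.add_of_orthogonal _ _ (isIdempotentElem_single i) (isIdempotentElem_diagIdem s)
        (single_mul_diagIdem hi) (diagIdem_mul_single hi), ih, heq i i0,
        Finset.card_insert_of_notMem hi]
      push_cast
      ring
  have h1 := key Finset.univ
  rw [diagIdem_univ, h.map_one, Finset.card_univ, Fintype.card_fin] at h1
  have hn' : (n : ℝ) ≠ 0 := by exact_mod_cast hn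
  rw [key s, eq_div_iff hn', mul_assoc, mul_comm _ (n : ℝ), ← h1, mul_one]

lemma rk_diagIdem (s : Finset (Fin n)) : rk (diagIdem s : Matrix (Fin n) (Fin n) F) = s.card := by
  rcases eq_or_ne n 0 with rfl | hn
  · have := Subsingleton.elim s ∅
    subst this
    simp [diagIdem, rk_zero]
  · have h := pseudoRank_diagIdem hn (isPseudoRankFunction_rk (F := F) hn) s
    have hn' : (n : ℝ) ≠ 0 := by exact_mod_cast hn
    rw [div_left_inj' hn'] at h
    exact_mod_cast h

lemma rk_le (x : Matrix (Fin n) (Fin n) F) : rk x ≤ n := by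
  have := rk_mul_le_left 1 x
  rwa [rk_one, one_mul] at this

lemma exists_diagIdem {k : ℕ} (hk : k ≤ n) :
    ∃ e : Matrix (Fin n) (Fin n) F, IsIdempotentElem e ∧ rk e = k := by
  obtain ⟨s, -, hs⟩ := Finset.exists_subset_card_eq (s := (Finset.univ : Finset (Fin n))) (n := k)
    (by simpa using hk)
  exact ⟨diagIdem s, isIdempotentElem_diagIdem s, by rw [rk_diagIdem, hs]⟩

/-- Uniqueness of the pseudo-rank function on a matrix ring over a division ring. -/
lemma pseudoRank_eq_rk (hn : n ≠ 0) {N : Matrix (Fin n) (Fin n) F → ℝ}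
    (h : IsPseudoRankFunction N) (x : Matrix (Fin n) (Fin n) F) : N x = (rk x : ℝ) / n := by
  obtain ⟨s, -, hs⟩ := Finset.exists_subset_card_eq (s := (Finset.univ : Finset (Fin n)))
    (n := rk x) (by simpa using rk_le x)
  rw [← hs, ← pseudoRank_diagIdem hn h s]
  have hr : rk x = rk (diagIdem s : Matrix (Fin n) (Fin n) F) := by rw [rk_diagIdem, hs]
  apply le_antisymm
  · obtain ⟨p, q, hpq⟩ := exists_mul_of_rk_le hr.le
    rw [hpq]
    exact (h.mul_le_left _ _).trans (h.mul_le_right _ _)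
  · obtain ⟨p, q, hpq⟩ := exists_mul_of_rk_le hr.ge
    rw [hpq]
    exact (h.mul_le_left _ _).trans (h.mul_le_right _ _)

end Unique

/-! ### Limits in the rank metric -/

section Limits

variable {M : Type*} [Ring M] {N : M → ℝ}

lemma RankTendsto.unique (hN : IsRankFunction N) {u : ℕ → M} {x y : M}
    (hx : RankTendsto N u x) (hy : RankTendsto N u y) : x = y := by
  rw [← sub_eq_zero]
  apply hN.2
  apply le_antisymm _ (hN.1.nonneg _)
  apply le_of_forall_pos_lt_add
  intro ε hε
  obtain ⟨n1, h1⟩ := hx (ε / 2) (by linarith)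
  obtain ⟨n2, h2⟩ := hy (ε / 2) (by linarith)
  have h3 := h1 (max n1 n2) (le_max_left _ _)
  have h4 := h2 (max n1 n2) (le_max_right _ _)
  have h5 := hN.1.dist_triangle x (u (max n1 n2)) y
  rw [hN.1.map_sub_comm x (u _)] at h5
  linarith

lemma RankTendsto.mul (hN : IsPseudoRankFunction N) {u v : ℕ → M} {x y : M}
    (hx : RankTendsto N u x) (hy : RankTendsto N v y) :
    RankTendsto N (fun n => u n * v n) (x * y) := by
  intro ε hε
  obtain ⟨n1, h1⟩ := hx (ε / 2) (by linarith)
  obtain ⟨n2, h2⟩ := hy (ε / 2) (by linarith)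
  refine ⟨max n1 n2, fun n hn => ?_⟩
  have h3 := h1 n ((le_max_left _ _).trans hn)
  have h4 := h2 n ((le_max_right _ _).trans hn)
  have h5 : u n * v n - x * y = (u n - x) * v n + x * (v n - y) := by noncomm_ring
  have h6 := hN.subadditive ((u n - x) * v n) (x * (v n - y))
  have h7 := hN.mul_le_left (u n - x) (v n)
  have h8 := hN.mul_le_right x (v n - y)
  simp only [h5]
  linarith

lemma rankTendsto_const (hN : IsPseudoRankFunction N) (x : M) :
    RankTendsto N (fun _ => x) x := by
  intro ε hε
  exact ⟨0, fun n _ => by simpa [hN.map_zero] using hε⟩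

lemma geom_bound (hN : IsPseudoRankFunction N) {u : ℕ → M} {c : ℝ}
    (h : ∀ j, N (u (j + 1) - u j) ≤ c * (1 / 2) ^ j) (j i : ℕ) :
    N (u (j + i) - u j) ≤ 2 * c * ((1 / 2) ^ j - (1 / 2) ^ (j + i)) := by
  induction i with
  | zero => simp [hN.map_zero]
  | succ i ih =>
    have h1 := hN.dist_triangle (u (j + (i + 1))) (u (j + i)) (u j)
    have h2 := h (j + i)
    rw [← add_assoc] at h1 ⊢
    rw [pow_succ]
    linarith

lemma exists_limit_of_geom (hN : IsPseudoRankFunction N) (hc : RankComplete N)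
    {u : ℕ → M} {c : ℝ} (hc0 : 0 ≤ c)
    (h : ∀ j, N (u (j + 1) - u j) ≤ c * (1 / 2) ^ j) :
    ∃ x, RankTendsto N u x ∧ N (u 0 - x) ≤ 2 * c := by
  have hb : ∀ j i, j ≤ i → N (u i - u j) ≤ 2 * c * (1 / 2) ^ j := by
    intro j i hij
    obtain ⟨k, rfl⟩ := Nat.exists_eq_add_of_le hij
    refine (geom_bound hN h j k).trans ?_
    apply mul_le_mul_of_nonneg_left _ (by linarith)
    have : (0 : ℝ) ≤ (1 / 2) ^ (j + k) := by positivity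
    linarith
  have hcau : RankCauchy N u := by
    intro ε hε
    obtain ⟨n, hn⟩ := exists_pow_lt_of_lt_one (show (0 : ℝ) < ε / (4 * c + 1) by positivity)
      (show (1 / 2 : ℝ) < 1 by norm_num)
    rw [lt_div_iff₀ (by positivity)] at hn
    refine ⟨n, fun i j hi hj => ?_⟩
    have h1 := hN.dist_triangle (u i) (u n) (u j)
    have h2 := hb n i hi
    have h3 := hb n j hj
    rw [hN.map_sub_comm] at h3
    have : (0 : ℝ) < (1 / 2) ^ n := by positivity
    nlinarith
  obtain ⟨x, hx⟩ := hc u hcau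
  refine ⟨x, hx, ?_⟩
  apply le_of_forall_pos_lt_add
  intro ε hε
  obtain ⟨n, hn⟩ := hx ε hε
  have h1 := hN.dist_triangle (u 0) (u n) x
  have h2 := hb 0 n (Nat.zero_le _)
  rw [hN.map_sub_comm] at h2
  have h3 := hn n le_rfl
  simp only [pow_zero, mul_one] at h2
  linarith

variable {B : Subring M}

lemma exists_approx (hN : IsPseudoRankFunction N) (hd : RankDense N (B : Set M)) (x : M) {c : ℝ}
    (hc : 0 < c) : ∃ u : ℕ → M, (∀ j, u j ∈ B) ∧ RankTendsto N u x ∧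
      (∀ j, N (u j - x) ≤ c) ∧ ∀ j, N (u (j + 1) - u j) ≤ 2 * c * (1 / 2) ^ j := by
  have : ∀ j : ℕ, ∃ y ∈ B, N (x - y) < c * (1 / 2) ^ j := fun j => hd x _ (by positivity)
  choose u hu1 hu2 using this
  refine ⟨u, hu1, ?_, ?_, ?_⟩
  · intro ε hε
    obtain ⟨n, hn⟩ := exists_pow_lt_of_lt_one (show (0 : ℝ) < ε / c by positivity)
      (show (1 / 2 : ℝ) < 1 by norm_num)
    rw [lt_div_iff₀ (by positivity)] at hn
    refine ⟨n, fun i hi => ?_⟩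
    rw [hN.map_sub_comm]
    refine (hu2 i).trans (lt_of_le_of_lt ?_ hn)
    rw [mul_comm]
    gcongr ?_ * c
    exact pow_le_pow_of_le_one (by norm_num) (by norm_num) hi
  · intro j
    rw [hN.map_sub_comm]
    refine (hu2 j).le.trans ?_
    have : (1 / 2 : ℝ) ^ j ≤ 1 := pow_le_one₀ (by norm_num) (by norm_num)
    nlinarith
  · intro j
    have h1 := hN.dist_triangle (u (j + 1)) x (u j)
    rw [hN.map_sub_comm _ x] at h1
    have h2 := hu2 j
    have h3 := hu2 (j + 1)
    rw [pow_succ] at h3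
    have : (0 : ℝ) < (1 / 2) ^ j := by positivity
    nlinarith

lemma kill_step (hN : IsPseudoRankFunction N) (hreg : ∀ x ∈ B, ∃ y ∈ B, x = x * y * x)
    {e z : M} (he : e ∈ B) (hz : z ∈ B) (hee : e * e = e) :
    ∃ g ∈ B, g * g = g ∧ e * g = g ∧ g * e = g ∧ g * z = 0 ∧ N (e - g) ≤ N z := by
  obtain ⟨s, hs, hsz⟩ := hreg (e * z) (B.mul_mem he hz)
  set w := e * z with hw
  have hew : ∀ t, e * (w * t) = w * t := by
    intro t; rw [hw, ← mul_assoc, ← mul_assoc, hee]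
  have hwB : w ∈ B := B.mul_mem he hz
  refine ⟨e - w * s * e, B.sub_mem he (B.mul_mem (B.mul_mem hwB hs) he), ?_, ?_, ?_, ?_, ?_⟩
  · have h1 : w * s * e * (w * s * e) = w * s * e := by
      calc w * s * e * (w * s * e) = w * s * (e * (w * (s * e))) := by simp only [mul_assoc]
        _ = (w * s * w) * (s * e) := by rw [hew]; simp only [mul_assoc]
        _ = w * s * e := by rw [← hsz]; simp only [mul_assoc]
    have h2 : e * (w * s * e) = w * s * e := by simp only [mul_assoc, hew]
    have h3 : w * s * e * e = w * s * e := by rw [mul_assoc, hee]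
    rw [sub_mul, mul_sub, mul_sub, hee, h1, h2, h3]
    abel
  · rw [mul_sub, hee]; simp only [mul_assoc, hew]
  · rw [sub_mul, hee, mul_assoc, hee]
  · rw [sub_mul, mul_assoc (w * s), ← hw, ← hsz, sub_self]
  · rw [sub_sub_cancel]
    exact ((hN.mul_le_left _ _).trans (hN.mul_le_left _ _)).trans (hN.mul_le_right _ _)

/-- Almost optimal left annihilating idempotents. -/
lemma exists_annihilator (hN : IsRankFunction N) (hc : RankComplete N)
    (hd : RankDense N (B : Set M)) (hreg : ∀ x ∈ B, ∃ y ∈ B, x = x * y * x)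
    (x : M) {ε : ℝ} (hε : 0 < ε) :
    ∃ g : M, g * g = g ∧ g * x = 0 ∧ N (1 - g) ≤ N x + ε := by
  obtain ⟨u, huB, hux, huc, hug⟩ := exists_approx hN.1 hd x (show 0 < ε / 5 by linarith)
  have step : ∀ (p : {e : M // e ∈ B ∧ e * e = e}) (z : M), ∃ g : {e : M // e ∈ B ∧ e * e = e},
      z ∈ B → (g : M) * p = g ∧ (g : M) * z = 0 ∧ N (p - g) ≤ N z := by
    rintro ⟨e, he, hee⟩ z
    by_cases hz : z ∈ B
    · obtain ⟨g, h1, h2, h3, h4, h5, h6⟩ := kill_step hN.1 hreg he hz hee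
      exact ⟨⟨g, h1, h2⟩, fun _ => ⟨h4, h5, h6⟩⟩
    · exact ⟨⟨e, he, hee⟩, fun h => absurd h hz⟩
  choose f hf using step
  let G : ℕ → {e : M // e ∈ B ∧ e * e = e} := fun j =>
    Nat.rec (f ⟨1, B.one_mem, one_mul 1⟩ (u 0)) (fun j g => f g (u (j + 1) - u j)) j
  have hG0 := hf ⟨1, B.one_mem, one_mul 1⟩ (u 0) (huB 0)
  have hGs : ∀ j : ℕ, (G (j + 1)).1 * (G j).1 = (G (j + 1)).1 ∧
      (G (j + 1)).1 * (u (j + 1) - u j) = 0 ∧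
      N ((G j).1 - (G (j + 1)).1) ≤ N (u (j + 1) - u j) := fun j =>
    hf (G j) (u (j + 1) - u j) (B.sub_mem (huB _) (huB _))
  have hkill : ∀ j, (G j).1 * u j = 0 := by
    intro j
    induction j with
    | zero => exact hG0.2.1
    | succ j ih =>
      have h1 := (hGs j).2.1
      have h2 : (G (j + 1)).1 * u j = 0 := by
        rw [← (hGs j).1, mul_assoc, ih, mul_zero]
      rw [mul_sub, h2, sub_zero] at h1
      exact h1
  obtain ⟨g, hg, hg0⟩ := exists_limit_of_geom hN.1 hc (u := fun j => (G j).1)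
    (c := 2 * (ε / 5)) (by linarith) (fun j => by
      rw [hN.1.map_sub_comm]; exact (hGs j).2.2.trans (hug j))
  refine ⟨g, ?_, ?_, ?_⟩
  · apply RankTendsto.unique hN (hg.mul hN.1 hg)
    have : (fun n => (G n).1 * (G n).1) = fun n => (G n).1 := funext fun n => (G n).2.2
    rw [this]
    exact hg
  · apply RankTendsto.unique hN (hg.mul hN.1 hux)
    have : (fun n => (G n).1 * u n) = fun n => 0 := funext hkill
    rw [this]
    exact rankTendsto_const hN.1 0
  · have h1 := hN.1.dist_triangle 1 (G 0).1 g
    have h2 : N (1 - (G 0).1) ≤ N (u 0) := hG0.2.2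
    have h3 := hN.1.subadditive (u 0 - x) x
    rw [sub_add_cancel] at h3
    have h4 := huc 0
    linarith

lemma compare_step (hN : IsPseudoRankFunction N) (hreg : ∀ x ∈ B, ∃ y ∈ B, x = x * y * x)
    (hcmp : ∀ x ∈ B, ∀ y ∈ B, N x ≤ N y → ∃ p ∈ B, ∃ q ∈ B, x = p * y * q)
    {e y p q : M} (heB : e ∈ B) (hyB : y ∈ B) (hpB : p ∈ B) (hqB : q ∈ B) (hee : e * e = e)
    (hey : N e ≤ N y) (hp : e * p = p) (hq : q * e = q) :
    ∃ p' ∈ B, ∃ q' ∈ B, e * p' = p' ∧ q' * e = q' ∧ p' * y * q' = e ∧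
      N (p' - p) ≤ N (p * y * q - e) ∧ N (q' - q) ≤ N (p * y * q - e) := by
  have hzB : p * y * q - e ∈ B := B.sub_mem (B.mul_mem (B.mul_mem hpB hyB) hqB) heB
  obtain ⟨g, hgB, hgg, heg, hge, hgz, hgN⟩ := kill_step hN hreg heB hzB hee
  have hfi : IsIdempotentElem (e - g) := by
    rw [IsIdempotentElem, sub_mul, mul_sub, mul_sub, hee, hgg, heg, hge]; abel
  have H : g * (p * (y * (q * g))) = g := by
    rw [mul_sub, hge, sub_eq_zero] at hgz
    calc g * (p * (y * (q * g))) = g * (p * y * q) * g := by simp only [mul_assoc]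
      _ = g := by rw [hgz, hgg]
  have H' : ∀ z, g * (p * (y * (q * (g * z)))) = g * z := by
    intro z
    calc g * (p * (y * (q * (g * z)))) = g * (p * (y * (q * g))) * z := by simp only [mul_assoc]
      _ = g * z := by rw [H]
  have hy'B : y - y * q * g * p * y ∈ B := B.sub_mem hyB
    (B.mul_mem (B.mul_mem (B.mul_mem (B.mul_mem hyB hqB) hgB) hpB) hyB)
  have hle : N (e - g) ≤ N (y - y * q * g * p * y) := by
    have h1 := hN.add_of_orthogonal (e - g) g hfi hgg
      (by rw [sub_mul, heg, hgg, sub_self]) (by rw [mul_sub, hge, hgg, sub_self])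
    rw [sub_add_cancel] at h1
    have h2 := hN.subadditive (y - y * q * g * p * y) (y * q * g * p * y)
    rw [sub_add_cancel] at h2
    have h3 : N (y * q * g * p * y) ≤ N g :=
      ((hN.mul_le_left _ _).trans (hN.mul_le_left _ _)).trans (hN.mul_le_right _ _)
    linarith
  obtain ⟨a, haB, b, hbB, hab⟩ := hcmp _ (B.sub_mem heB hgB) _ hy'B hle
  have hfB := B.sub_mem heB hgB
  have hef : e * (e - g) = e - g := by rw [mul_sub, hee, heg]
  have hfe : (e - g) * e = e - g := by rw [sub_mul, hee, hge]
  refine ⟨g * p + (e - g) * a * (1 - y * q * g * p),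
    B.add_mem (B.mul_mem hgB hpB) (B.mul_mem (B.mul_mem hfB haB) (B.sub_mem B.one_mem
      (B.mul_mem (B.mul_mem (B.mul_mem hyB hqB) hgB) hpB))),
    q * g + (1 - q * g * p * y) * b * (e - g),
    B.add_mem (B.mul_mem hqB hgB) (B.mul_mem (B.mul_mem (B.sub_mem B.one_mem
      (B.mul_mem (B.mul_mem (B.mul_mem hqB hgB) hpB) hyB)) hbB) hfB), ?_, ?_, ?_, ?_, ?_⟩
  · rw [mul_add, ← mul_assoc, heg, ← mul_assoc, ← mul_assoc, hef]
  · rw [add_mul, mul_assoc, hge, mul_assoc _ (e - g), hfe]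
  · have e1 : g * p * y * (q * g) = g := by simp only [mul_assoc, H]
    have e2 : g * p * y * (1 - q * g * p * y) = 0 := by
      simp only [mul_sub, mul_one, mul_assoc, H', sub_self]
    have e3 : (1 - y * q * g * p) * y * (q * g) = 0 := by
      simp only [sub_mul, one_mul, mul_assoc, H, sub_self]
    have e4 : (1 - y * q * g * p) * y * (1 - q * g * p * y) = y - y * q * g * p * y := by
      simp only [sub_mul, mul_sub, one_mul, mul_one, mul_assoc, H']
      abel
    calc (g * p + (e - g) * a * (1 - y * q * g * p)) * y *
          (q * g + (1 - q * g * p * y) * b * (e - g))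
        = g * p * y * (q * g) + (g * p * y * (1 - q * g * p * y)) * (b * (e - g))
          + (e - g) * a * ((1 - y * q * g * p) * y * (q * g))
          + (e - g) * (a * ((1 - y * q * g * p) * y * (1 - q * g * p * y)) * b) * (e - g) := by
          simp only [add_mul, mul_add, mul_assoc]
          abel
      _ = g + (e - g) * (e - g) * (e - g) := by
          rw [e1, e2, e3, e4, ← hab]; simp
      _ = e := by rw [hfi.eq, hfi.eq]; abel
  · have : g * p + (e - g) * a * (1 - y * q * g * p) - p =
        (e - g) * (a * (1 - y * q * g * p) - p) := by
      rw [mul_sub (e - g) (a * _) p, sub_mul e g p, hp, mul_assoc (e - g) a]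
      abel
    rw [this]
    exact (hN.mul_le_left _ _).trans hgN
  · have : q * g + (1 - q * g * p * y) * b * (e - g) - q =
        ((1 - q * g * p * y) * b - q) * (e - g) := by
      rw [sub_mul _ q, mul_sub q, hq]
      abel
    rw [this]
    exact (hN.mul_le_right _ _).trans hgN

/-- Comparison: idempotents of the dense subring factor through elements of larger rank. -/
lemma exists_factor (hN : IsRankFunction N) (hc : RankComplete N)
    (hd : RankDense N (B : Set M)) (hreg : ∀ x ∈ B, ∃ y ∈ B, x = x * y * x)
    (hcmp : ∀ x ∈ B, ∀ y ∈ B, N x ≤ N y → ∃ p ∈ B, ∃ q ∈ B, x = p * y * q)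
    {e x : M} (heB : e ∈ B) (hee : e * e = e) (hex : N e < N x) :
    ∃ p q, e = p * x * q := by
  obtain ⟨u, huB, hux, huc, hug⟩ := exists_approx hN.1 hd x (show 0 < N x - N e by linarith)
  have hue : ∀ j, N e ≤ N (u j) := by
    intro j
    have h1 := abs_le.1 (hN.1.abs_sub_le (u j) x)
    linarith [huc j]
  let T := {t : M × M // (t.1 ∈ B ∧ t.2 ∈ B) ∧ e * t.1 = t.1 ∧ t.2 * e = t.2}
  have step : ∀ (t : T) (y : M), ∃ t' : T, (y ∈ B ∧ N e ≤ N y) →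
      t'.1.1 * y * t'.1.2 = e ∧ N (t'.1.1 - t.1.1) ≤ N (t.1.1 * y * t.1.2 - e) ∧
      N (t'.1.2 - t.1.2) ≤ N (t.1.1 * y * t.1.2 - e) := by
    rintro ⟨⟨p, q⟩, ⟨hpB, hqB⟩, hp, hq⟩ y
    by_cases hy : y ∈ B ∧ N e ≤ N y
    · obtain ⟨p', hp'B, q', hq'B, h1, h2, h3, h4, h5⟩ :=
        compare_step hN.1 hreg hcmp heB hy.1 hpB hqB hee hy.2 hp hq
      exact ⟨⟨(p', q'), ⟨hp'B, hq'B⟩, h1, h2⟩, fun _ => ⟨h3, h4, h5⟩⟩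
    · exact ⟨⟨(p, q), ⟨hpB, hqB⟩, hp, hq⟩, fun h => absurd h hy⟩
  choose f hf using step
  let t0 : T := ⟨(e, e), ⟨heB, heB⟩, hee, hee⟩
  let G : ℕ → T := fun j => Nat.rec (f t0 (u 0)) (fun j g => f g (u (j + 1))) j
  have hG : ∀ j, (G j).1.1 * u j * (G j).1.2 = e := by
    intro j
    cases j with
    | zero => exact (hf t0 (u 0) ⟨huB 0, hue 0⟩).1
    | succ j => exact (hf (G j) (u (j + 1)) ⟨huB _, hue _⟩).1
  have hb : ∀ j, N ((G j).1.1 * u (j + 1) * (G j).1.2 - e) ≤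
      2 * (N x - N e) * (1 / 2) ^ j := by
    intro j
    refine le_trans ?_ (hug j)
    have : (G j).1.1 * u (j + 1) * (G j).1.2 - e =
        (G j).1.1 * (u (j + 1) - u j) * (G j).1.2 := by
      rw [mul_sub, sub_mul, hG j]
    rw [this]
    exact (hN.1.mul_le_left _ _).trans (hN.1.mul_le_right _ _)
  obtain ⟨p, hp, -⟩ := exists_limit_of_geom hN.1 hc (u := fun j => (G j).1.1)
    (c := 2 * (N x - N e)) (by linarith)
    (fun j => (hf (G j) (u (j + 1)) ⟨huB _, hue _⟩).2.1.trans (hb j))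
  obtain ⟨q, hq, -⟩ := exists_limit_of_geom hN.1 hc (u := fun j => (G j).1.2)
    (c := 2 * (N x - N e)) (by linarith)
    (fun j => (hf (G j) (u (j + 1)) ⟨huB _, hue _⟩).2.2.trans (hb j))
  refine ⟨p, q, ?_⟩
  apply RankTendsto.unique hN _ ((hp.mul hN.1 hux).mul hN.1 hq)
  have : (fun n => (G n).1.1 * u n * (G n).1.2) = fun n => e := funext hG
  rw [this]
  exact rankTendsto_const hN.1 e

/-- A pseudo-rank function agreeing with `N` on `B` is `N`. -/
lemma pseudoRank_eq_of_dense (hN : IsRankFunction N) (hc : RankComplete N)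
    (hd : RankDense N (B : Set M)) (hreg : ∀ x ∈ B, ∃ y ∈ B, x = x * y * x)
    (hcmp : ∀ x ∈ B, ∀ y ∈ B, N x ≤ N y → ∃ p ∈ B, ∃ q ∈ B, x = p * y * q)
    (hval : ∀ r : ℝ, 0 < r → r ≤ 1 → ∀ ε > 0, ∃ e ∈ B, e * e = e ∧ N e < r ∧ r - ε < N e)
    {N' : M → ℝ} (hN' : IsPseudoRankFunction N') (hB : ∀ x ∈ B, N' x = N x) (x : M) :
    N' x = N x := by
  have hge : ∀ x, N x ≤ N' x := by
    intro x
    rcases (hN.1.nonneg x).eq_or_lt with h0 | h0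
    · rw [← h0]; exact hN'.nonneg x
    apply le_of_forall_pos_lt_add
    intro ε hε
    obtain ⟨e, heB, hee, h1, h2⟩ := hval (N x) h0 (hN.1.le_one x) ε hε
    obtain ⟨p, q, hpq⟩ := exists_factor hN hc hd hreg hcmp heB hee h1
    have h3 : N' e ≤ N' x := by
      rw [hpq]
      exact (hN'.mul_le_left _ _).trans (hN'.mul_le_right _ _)
    rw [hB e heB] at h3
    linarith
  apply le_antisymm _ (hge x)
  apply le_of_forall_pos_le_add
  intro ε hε
  obtain ⟨g, hgg, hgx, hg⟩ := exists_annihilator hN hc hd hreg x hε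
  have hcompl : ∀ {P : M → ℝ}, IsPseudoRankFunction P → P (1 - g) = 1 - P g := by
    intro P hP
    have h1 := hP.add_of_orthogonal (1 - g) g (IsIdempotentElem.one_sub hgg) hgg
      (by rw [sub_mul, one_mul, hgg, sub_self]) (by rw [mul_sub, mul_one, hgg, sub_self])
    rw [sub_add_cancel, hP.map_one] at h1
    linarith
  have h1 : x = (1 - g) * x := by rw [sub_mul, one_mul, hgx, sub_zero]
  have h2 : N' x ≤ N' (1 - g) := by
    conv_lhs => rw [h1]
    exact hN'.mul_le_left _ _
  rw [hcompl hN'] at h2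
  rw [hcompl hN.1] at hg
  linarith [hge g]

lemma isSimpleRing_of_dense (hN : IsRankFunction N) (hc : RankComplete N)
    (hd : RankDense N (B : Set M)) (hreg : ∀ x ∈ B, ∃ y ∈ B, x = x * y * x)
    (hcmp : ∀ x ∈ B, ∀ y ∈ B, N x ≤ N y → ∃ p ∈ B, ∃ q ∈ B, x = p * y * q)
    (hval : ∀ r : ℝ, 0 < r → r ≤ 1 → ∀ ε > 0, ∃ e ∈ B, e * e = e ∧ N e < r ∧ r - ε < N e)
    (hsim : ∀ e ∈ B, e ≠ 0 → ∀ J : TwoSidedIdeal M, e ∈ J → (1 : M) ∈ J) :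
    IsSimpleRing M := by
  have hnt : Nontrivial M := by
    refine ⟨0, 1, fun h => ?_⟩
    have h1 := hN.1.map_one
    rw [← h, hN.1.map_zero] at h1
    exact zero_ne_one h1
  apply IsSimpleRing.of_eq_bot_or_eq_top
  intro J
  by_cases hJ : ∃ x ∈ J, x ≠ 0
  · right
    obtain ⟨x, hx, hx0⟩ := hJ
    have hpos : 0 < N x := lt_of_le_of_ne (hN.1.nonneg x) (fun h => hx0 (hN.2 x h.symm))
    obtain ⟨e, heB, hee, h1, h2⟩ := hval (N x) hpos (hN.1.le_one x) (N x) hpos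
    obtain ⟨p, q, hpq⟩ := exists_factor hN hc hd hreg hcmp heB hee h1
    have he0 : e ≠ 0 := by
      rintro rfl
      rw [hN.1.map_zero] at h2
      linarith
    have heJ : e ∈ J := by
      rw [hpq]
      exact J.mul_mem_right _ _ (J.mul_mem_left _ _ hx)
    have h1J := hsim e heB he0 J heJ
    rw [eq_top_iff]
    intro y _
    simpa using J.mul_mem_left y 1 h1J
  · left
    push Not at hJ
    rw [eq_bot_iff]
    intro y hy
    rw [hJ y hy]
    exact TwoSidedIdeal.zero_mem _

end Limits

/-! ### The tower of matrix algebras -/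

section Tower

variable {K : Type*} [Field K] {M : Type*} [Ring M] [Algebra K M] {N : M → ℝ}
  {A : ℕ → Subalgebra K M}

/-- The ring homomorphism from the matrix ring determined by the isomorphism. -/
def towerHom (φ : ∀ n, (A n) ≃ₐ[K] Matrix (Fin (2 ^ n)) (Fin (2 ^ n)) K) (n : ℕ) :
    Matrix (Fin (2 ^ n)) (Fin (2 ^ n)) K →ₐ[K] M :=
  (A n).val.comp (φ n).symm.toAlgHom

lemma towerHom_apply (φ : ∀ n, (A n) ≃ₐ[K] Matrix (Fin (2 ^ n)) (Fin (2 ^ n)) K) (n : ℕ)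
    (x : A n) : towerHom φ n (φ n x) = x := by
  simp [towerHom]

lemma towerHom_mem (φ : ∀ n, (A n) ≃ₐ[K] Matrix (Fin (2 ^ n)) (Fin (2 ^ n)) K) (n : ℕ)
    (x) : towerHom φ n x ∈ A n := by
  simp [towerHom]

lemma rank_towerHom (hN : IsPseudoRankFunction N)
    (φ : ∀ n, (A n) ≃ₐ[K] Matrix (Fin (2 ^ n)) (Fin (2 ^ n)) K) (n : ℕ) (x) :
    N (towerHom φ n x) = (rk x : ℝ) / (2 ^ n : ℕ) :=
  pseudoRank_eq_rk (by positivity) (hN.comp (towerHom φ n).toRingHom) x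

/-- The union of the tower. -/
def towerUnion (A : ℕ → Subalgebra K M) : Subring M := (⨆ n, A n).toSubring

lemma mem_towerUnion (hchain : ∀ n, A n ≤ A (n + 1)) {x : M} :
    x ∈ towerUnion A ↔ ∃ n, x ∈ A n := by
  have h : ((⨆ n, A n : Subalgebra K M) : Set M) = ⋃ n, (A n : Set M) :=
    Subalgebra.coe_iSup_of_directed (monotone_nat_of_le_succ hchain).directed_le
  have h2 : x ∈ ((⨆ n, A n : Subalgebra K M) : Set M) ↔ x ∈ ⋃ n, (A n : Set M) := by rw [h]
  rw [Set.mem_iUnion] at h2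
  exact h2

lemma coe_towerUnion (hchain : ∀ n, A n ≤ A (n + 1)) :
    (towerUnion A : Set M) = ⋃ n, (A n : Set M) := by
  ext x
  simp [mem_towerUnion hchain]

lemma tower_reg (hchain : ∀ n, A n ≤ A (n + 1))
    (φ : ∀ n, (A n) ≃ₐ[K] Matrix (Fin (2 ^ n)) (Fin (2 ^ n)) K) :
    ∀ x ∈ towerUnion A, ∃ y ∈ towerUnion A, x = x * y * x := by
  intro x hx
  obtain ⟨n, hn⟩ := (mem_towerUnion hchain).1 hx
  obtain ⟨y, hy⟩ := exists_regular (φ n ⟨x, hn⟩)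
  refine ⟨towerHom φ n y, (mem_towerUnion hchain).2 ⟨n, towerHom_mem φ n y⟩, ?_⟩
  have := congrArg (towerHom φ n) hy
  rwa [map_mul, map_mul, towerHom_apply] at this

lemma tower_cmp (hN : IsPseudoRankFunction N) (hchain : ∀ n, A n ≤ A (n + 1))
    (φ : ∀ n, (A n) ≃ₐ[K] Matrix (Fin (2 ^ n)) (Fin (2 ^ n)) K) :
    ∀ x ∈ towerUnion A, ∀ y ∈ towerUnion A, N x ≤ N y →
      ∃ p ∈ towerUnion A, ∃ q ∈ towerUnion A, x = p * y * q := by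
  intro x hx y hy hxy
  obtain ⟨n1, hn1⟩ := (mem_towerUnion hchain).1 hx
  obtain ⟨n2, hn2⟩ := (mem_towerUnion hchain).1 hy
  obtain ⟨n, hxn, hyn⟩ : ∃ n, x ∈ A n ∧ y ∈ A n :=
    ⟨max n1 n2, monotone_nat_of_le_succ hchain (le_max_left _ _) hn1,
      monotone_nat_of_le_succ hchain (le_max_right _ _) hn2⟩
  have h1 := rank_towerHom hN φ n (φ n ⟨x, hxn⟩)
  have h2 := rank_towerHom hN φ n (φ n ⟨y, hyn⟩)
  rw [towerHom_apply] at h1 h2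
  rw [h1, h2, div_le_div_iff_of_pos_right (by positivity)] at hxy
  obtain ⟨p, q, hpq⟩ := exists_mul_of_rk_le (Nat.cast_le.1 hxy)
  refine ⟨towerHom φ n p, (mem_towerUnion hchain).2 ⟨n, towerHom_mem φ n p⟩,
    towerHom φ n q, (mem_towerUnion hchain).2 ⟨n, towerHom_mem φ n q⟩, ?_⟩
  have := congrArg (towerHom φ n) hpq
  rwa [map_mul, map_mul, towerHom_apply, towerHom_apply] at this

lemma tower_val (hN : IsPseudoRankFunction N) (hchain : ∀ n, A n ≤ A (n + 1))
    (φ : ∀ n, (A n) ≃ₐ[K] Matrix (Fin (2 ^ n)) (Fin (2 ^ n)) K) :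
    ∀ r : ℝ, 0 < r → r ≤ 1 → ∀ ε > 0,
      ∃ e ∈ towerUnion A, e * e = e ∧ N e < r ∧ r - ε < N e := by
  intro r hr hr1 ε hε
  obtain ⟨n, hn⟩ := exists_pow_lt_of_lt_one hε (show (1 / 2 : ℝ) < 1 by norm_num)
  have h2 : (0 : ℝ) < 2 ^ n := by positivity
  -- the largest integer below `r * 2 ^ n`
  obtain ⟨k, hk⟩ : ∃ k : ℕ, ⌈r * 2 ^ n⌉₊ = k + 1 :=
    Nat.exists_eq_succ_of_ne_zero (Nat.ceil_pos.2 (by positivity)).ne'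
  have hk1 : (k : ℝ) < r * 2 ^ n := Nat.lt_ceil.1 (by omega)
  have hk2 : r * 2 ^ n ≤ k + 1 := by
    have := Nat.le_ceil (r * 2 ^ n)
    rw [hk] at this
    exact_mod_cast this
  have hk3 : k ≤ 2 ^ n := by
    have : (k : ℝ) ≤ (2 ^ n : ℕ) := by push_cast; nlinarith
    exact_mod_cast this
  obtain ⟨e, he, hek⟩ := exists_diagIdem (F := K) hk3
  refine ⟨towerHom φ n e, (mem_towerUnion hchain).2 ⟨n, towerHom_mem φ n e⟩, ?_, ?_, ?_⟩
  · rw [← map_mul, he.eq]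
  · rw [rank_towerHom hN, hek]
    push_cast
    rwa [div_lt_iff₀ h2]
  · rw [rank_towerHom hN, hek]
    push_cast
    rw [lt_div_iff₀ h2]
    rw [one_div, inv_pow, inv_lt_iff_one_lt_mul₀ h2] at hn
    linarith

lemma tower_sim (hchain : ∀ n, A n ≤ A (n + 1))
    (φ : ∀ n, (A n) ≃ₐ[K] Matrix (Fin (2 ^ n)) (Fin (2 ^ n)) K) :
    ∀ e ∈ towerUnion A, e ≠ 0 → ∀ J : TwoSidedIdeal M, e ∈ J → (1 : M) ∈ J := by
  intro e he he0 J heJ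
  obtain ⟨n, hn⟩ := (mem_towerUnion hchain).1 he
  have : Nonempty (Fin (2 ^ n)) := ⟨⟨0, by positivity⟩⟩
  have h1 := IsSimpleRing.one_mem_of_ne_zero_mem (J.comap (towerHom φ n))
    (x := φ n ⟨e, hn⟩) (by
      intro h
      apply he0
      have := congrArg (towerHom φ n) h
      rwa [towerHom_apply, map_zero] at this)
    (by rw [TwoSidedIdeal.mem_comap, towerHom_apply]; exact heJ)
  rw [TwoSidedIdeal.mem_comap, map_one] at h1
  exact h1

end Tower

/-! ### Simplicity of the tensor product -/

section TensorSimple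

variable {K : Type*} [Field K] {D : Type*} [DivisionRing D] [Algebra K D]
  {M : Type*} [Ring M] [Algebra K M]

lemma repr_mul_right {ι : Type*} (b : Module.Basis ι K M) (x : D ⊗[K] M) (d : D) (i : ι) :
    (Algebra.TensorProduct.basis D b).repr (x * (d ⊗ₜ 1)) i =
      (Algebra.TensorProduct.basis D b).repr x i * d := by
  induction x using TensorProduct.induction_on with
  | zero => simp
  | tmul c m =>
    simp [Algebra.TensorProduct.basis_repr_tmul, mul_assoc, Algebra.commutes]
  | add x y hx hy => rw [add_mul, map_add, map_add, Finsupp.add_apply, Finsupp.add_apply, hx, hy,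
      add_mul]

lemma repr_mul_left {ι : Type*} (b : Module.Basis ι K M) (x : D ⊗[K] M) (d : D) (i : ι) :
    (Algebra.TensorProduct.basis D b).repr ((d ⊗ₜ 1) * x) i =
      d * (Algebra.TensorProduct.basis D b).repr x i := by
  induction x using TensorProduct.induction_on with
  | zero => simp
  | tmul c m => simp [Algebra.TensorProduct.basis_repr_tmul, mul_assoc]
  | add x y hx hy => rw [mul_add, map_add, map_add, Finsupp.add_apply, Finsupp.add_apply, hx, hy,
      mul_add]

lemma isSimpleRing_tensor
    (hcenter : Set.range (algebraMap K D) = (Subring.center D : Set D)) [IsSimpleRing M] :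
    IsSimpleRing (D ⊗[K] M) := by
  let b := Module.Basis.ofVectorSpace K M
  let β := Algebra.TensorProduct.basis D b
  have : Nontrivial M := inferInstance
  have hnt : Nontrivial (D ⊗[K] M) := inferInstance
  apply IsSimpleRing.of_eq_bot_or_eq_top
  intro J
  by_cases hJ : ∃ x ∈ J, x ≠ 0
  swap
  · left
    push Not at hJ
    rw [eq_bot_iff]
    intro y hy
    rw [hJ y hy]
    exact TwoSidedIdeal.zero_mem _
  right
  -- element with minimal support
  have hex : ∃ n : ℕ, ∃ x ∈ J, x ≠ 0 ∧ (β.repr x).support.card = n := by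
    obtain ⟨x, h1, h2⟩ := hJ
    exact ⟨_, x, h1, h2, rfl⟩
  classical
  obtain ⟨x, hxJ, hx0, hxn⟩ := Nat.find_spec hex
  have hmin : ∀ y ∈ J, (β.repr y).support.card < (β.repr x).support.card → y = 0 := by
    intro y hy hlt
    by_contra hy0
    rw [hxn] at hlt
    exact Nat.find_min hex hlt ⟨y, hy, hy0, rfl⟩
  obtain ⟨i, hi⟩ : ∃ i, β.repr x i ≠ 0 := by
    by_contra h
    push Not at h
    apply hx0
    apply β.repr.injective
    ext j
    simp [h j]
  set x' : D ⊗[K] M := ((β.repr x i)⁻¹ ⊗ₜ 1) * x with hx'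
  have hx'J : x' ∈ J := J.mul_mem_left _ _ hxJ
  have hx'i : β.repr x' i = 1 := by
    rw [hx', repr_mul_left, inv_mul_cancel₀ hi]
  have hx's : ∀ j, β.repr x j = 0 → β.repr x' j = 0 := by
    intro j hj
    rw [hx', repr_mul_left, hj, mul_zero]
  have hcomm : ∀ d : D, (d ⊗ₜ 1) * x' - x' * (d ⊗ₜ 1) = 0 := by
    intro d
    apply hmin _ (J.sub_mem (J.mul_mem_left _ _ hx'J) (J.mul_mem_right _ _ hx'J))
    apply Finset.card_lt_card
    have hc : ∀ j, β.repr ((d ⊗ₜ 1) * x' - x' * (d ⊗ₜ 1)) j =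
        d * β.repr x' j - β.repr x' j * d := by
      intro j
      rw [map_sub, Finsupp.sub_apply, repr_mul_left, repr_mul_right]
    rw [Finset.ssubset_iff_of_subset]
    · refine ⟨i, Finsupp.mem_support_iff.2 hi, ?_⟩
      rw [Finsupp.notMem_support_iff, hc, hx'i]
      simp
    · intro j hj
      rw [Finsupp.mem_support_iff] at hj ⊢
      intro h0
      apply hj
      rw [hc, hx's j h0]
      simp
  have hK : ∀ j, ∃ k : K, algebraMap K D k = β.repr x' j := by
    intro j
    have : β.repr x' j ∈ (Subring.center D : Set D) := by
      rw [SetLike.mem_coe, Subring.mem_center_iff]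
      intro d
      have h1 := congrArg (fun y => β.repr y j) (hcomm d)
      simp only [map_sub, Finsupp.sub_apply, map_zero, Finsupp.zero_apply] at h1
      rw [repr_mul_left, repr_mul_right, sub_eq_zero] at h1
      exact h1
    rw [← hcenter] at this
    exact this
  choose κ hκ using hK
  obtain ⟨m, hm⟩ : ∃ m : M, x' = 1 ⊗ₜ m := by
    refine ⟨∑ j ∈ (β.repr x').support, κ j • b j, ?_⟩
    conv_lhs => rw [← β.linearCombination_repr x', Finsupp.linearCombination_apply, Finsupp.sum]
    rw [TensorProduct.tmul_sum]
    refine Finset.sum_congr rfl fun j _ => ?_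
    rw [← hκ j, Algebra.TensorProduct.basis_apply, TensorProduct.smul_tmul',
      TensorProduct.tmul_smul, TensorProduct.smul_tmul', smul_eq_mul, mul_one, Algebra.smul_def,
      mul_one]
  have hm0 : m ≠ 0 := by
    rintro rfl
    rw [TensorProduct.tmul_zero] at hm
    rw [hm] at hx'i
    simp at hx'i
  have h1 := IsSimpleRing.one_mem_of_ne_zero_mem
    (J.comap (Algebra.TensorProduct.includeRight : M →ₐ[K] D ⊗[K] M)) hm0
    (by rw [TwoSidedIdeal.mem_comap, Algebra.TensorProduct.includeRight_apply, ← hm]; exact hx'J)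
  rw [TwoSidedIdeal.mem_comap, map_one] at h1
  rw [eq_top_iff]
  intro y _
  simpa using J.mul_mem_left y 1 h1

/-- Pseudo-rank functions on simple rings are rank functions. -/
lemma IsPseudoRankFunction.isRankFunction {R : Type*} [Ring R] [IsSimpleRing R] {N : R → ℝ}
    (h : IsPseudoRankFunction N) : IsRankFunction N := by
  refine ⟨h, fun x hx => ?_⟩
  by_contra hx0
  let J : TwoSidedIdeal R := TwoSidedIdeal.mk' {x | N x = 0} h.map_zero
    (fun {a b} ha hb => le_antisymm ((h.subadditive a b).trans (by
      have ha' : N a = 0 := ha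
      have hb' : N b = 0 := hb
      rw [ha', hb', add_zero])) (h.nonneg _))
    (fun {a} ha => (h.map_neg a).trans ha)
    (fun {a b} hb => le_antisymm ((h.mul_le_right a b).trans (le_of_eq hb)) (h.nonneg _))
    (fun {a b} ha => le_antisymm ((h.mul_le_left a b).trans (le_of_eq ha)) (h.nonneg _))
  have hJ : ∀ y, y ∈ J ↔ N y = 0 := fun y => by simp [J, TwoSidedIdeal.mem_mk']
  have h1 := IsSimpleRing.one_mem_of_ne_zero_mem J hx0 ((hJ x).2 hx)
  rw [hJ, h.map_one] at h1
  exact one_ne_zero h1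

end TensorSimple

/-! ### Existence: an ultraproduct construction -/

section Ultra

open Filter Topology

/-- Ultralimit of a real sequence. -/
def ulim (f : ℕ → ℝ) : ℝ := limUnder (hyperfilter ℕ : Filter ℕ) f

lemma tendsto_ulim {f : ℕ → ℝ} (h0 : ∀ k, 0 ≤ f k) (h1 : ∀ k, f k ≤ 1) :
    Tendsto f (hyperfilter ℕ : Filter ℕ) (𝓝 (ulim f)) := by
  apply tendsto_nhds_limUnder
  obtain ⟨x, -, hx⟩ := (isCompact_Icc (a := (0 : ℝ)) (b := 1)).ultrafilter_le_nhds
    ((hyperfilter ℕ).map f) (by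
      rw [le_principal_iff]
      exact Filter.mem_map.2 (Filter.univ_mem' fun k => ⟨h0 k, h1 k⟩))
  exact ⟨x, hx⟩

lemma ulim_eq {f : ℕ → ℝ} {c : ℝ} (h : Tendsto f atTop (𝓝 c)) : ulim f = c :=
  Tendsto.limUnder_eq (h.mono_left (by
    rw [← Nat.cofinite_eq_atTop]; exact hyperfilter_le_cofinite))

variable (D : Type*) [DivisionRing D]

/-- The product of all the matrix rings. -/
abbrev ProdMat : Type _ := ∀ k : ℕ, Matrix (Fin (2 ^ k)) (Fin (2 ^ k)) D

variable {D}

/-- Normalized rank sequence. -/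
def nrk (x : ProdMat D) (k : ℕ) : ℝ := (rk (x k) : ℝ) / (2 ^ k : ℕ)

lemma nrk_pseudo (k : ℕ) : IsPseudoRankFunction
    (fun x : Matrix (Fin (2 ^ k)) (Fin (2 ^ k)) D => (rk x : ℝ) / (2 ^ k : ℕ)) :=
  isPseudoRankFunction_rk (by positivity)

/-- Ultralimit of normalized ranks. -/
def urk (x : ProdMat D) : ℝ := ulim (nrk x)

lemma tendsto_urk (x : ProdMat D) :
    Tendsto (nrk x) (hyperfilter ℕ : Filter ℕ) (𝓝 (urk x)) :=
  tendsto_ulim (fun k => (nrk_pseudo k).nonneg _) (fun k => (nrk_pseudo k).le_one _)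

lemma urk_nonneg (x : ProdMat D) : 0 ≤ urk x :=
  ge_of_tendsto' (tendsto_urk x) fun k => (nrk_pseudo k).nonneg _

lemma urk_zero : urk (0 : ProdMat D) = 0 := by
  apply ulim_eq
  have : nrk (0 : ProdMat D) = fun _ => 0 := funext fun k => (nrk_pseudo k).map_zero
  rw [this]
  exact tendsto_const_nhds

lemma urk_one : urk (1 : ProdMat D) = 1 := by
  apply ulim_eq
  have : nrk (1 : ProdMat D) = fun _ => 1 := funext fun k => (nrk_pseudo k).map_one
  rw [this]
  exact tendsto_const_nhds

lemma urk_add (x y : ProdMat D) : urk (x + y) ≤ urk x + urk y :=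
  le_of_tendsto_of_tendsto' (tendsto_urk _) ((tendsto_urk x).add (tendsto_urk y))
    fun k => (nrk_pseudo k).subadditive _ _

lemma urk_mul_left (x y : ProdMat D) : urk (x * y) ≤ urk x :=
  le_of_tendsto_of_tendsto' (tendsto_urk _) (tendsto_urk x)
    fun k => (nrk_pseudo k).mul_le_left _ _

lemma urk_mul_right (x y : ProdMat D) : urk (x * y) ≤ urk y :=
  le_of_tendsto_of_tendsto' (tendsto_urk _) (tendsto_urk y)
    fun k => (nrk_pseudo k).mul_le_right _ _

lemma urk_frobenius (x y z : ProdMat D) :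
    urk (x * y) + urk (y * z) ≤ urk y + urk (x * y * z) :=
  le_of_tendsto_of_tendsto' ((tendsto_urk _).add (tendsto_urk _))
    ((tendsto_urk _).add (tendsto_urk _)) fun k => by
      unfold nrk
      rw [← add_div, ← add_div]
      apply div_le_div_of_nonneg_right _ (by positivity)
      exact_mod_cast rk_frobenius (x k) (y k) (z k)

lemma urk_pseudo : IsPseudoRankFunction (urk (D := D)) :=
  IsPseudoRankFunction.of_frobenius urk_nonneg urk_zero urk_one urk_add urk_mul_left
    urk_mul_right urk_frobenius

variable (D) in
/-- The null ideal. -/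
def nullIdeal : Ideal (ProdMat D) where
  carrier := {x | urk x = 0}
  add_mem' {a b} ha hb := by
    have ha' : urk a = 0 := ha
    have hb' : urk b = 0 := hb
    exact le_antisymm ((urk_add a b).trans (by rw [ha', hb', add_zero])) (urk_nonneg _)
  zero_mem' := urk_zero
  smul_mem' c x hx := le_antisymm ((urk_mul_right c x).trans (le_of_eq hx)) (urk_nonneg _)

lemma mem_nullIdeal {x : ProdMat D} : x ∈ nullIdeal D ↔ urk x = 0 := Iff.rfl

instance : (nullIdeal D).IsTwoSided where
  mul_mem_of_left {a} b ha := le_antisymm ((urk_mul_left a b).trans (le_of_eq ha)) (urk_nonneg _)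

/-- The induced function on the quotient. -/
def qrk (q : ProdMat D ⧸ nullIdeal D) : ℝ :=
  urk (Function.surjInv Ideal.Quotient.mk_surjective q)

lemma qrk_mk (x : ProdMat D) : qrk (Ideal.Quotient.mk (nullIdeal D) x) = urk x := by
  have h := Function.surjInv_eq (Ideal.Quotient.mk_surjective (I := nullIdeal D))
    (Ideal.Quotient.mk (nullIdeal D) x)
  rw [Ideal.Quotient.mk_eq_mk_iff_sub_mem, mem_nullIdeal] at h
  have h2 := urk_pseudo.abs_sub_le
    (Function.surjInv Ideal.Quotient.mk_surjective (Ideal.Quotient.mk (nullIdeal D) x)) x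
  rw [h] at h2
  exact sub_eq_zero.1 (abs_nonpos_iff.1 h2)

lemma qrk_pseudo : IsPseudoRankFunction (qrk (D := D)) := by
  have hs := Ideal.Quotient.mk_surjective (I := nullIdeal D)
  apply IsPseudoRankFunction.of_frobenius
  · intro x; exact urk_nonneg _
  · rw [← map_zero (Ideal.Quotient.mk (nullIdeal D)), qrk_mk, urk_zero]
  · rw [← map_one (Ideal.Quotient.mk (nullIdeal D)), qrk_mk, urk_one]
  · intro a b
    obtain ⟨a, rfl⟩ := hs a
    obtain ⟨b, rfl⟩ := hs b
    rw [← map_add, qrk_mk, qrk_mk, qrk_mk]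
    exact urk_add a b
  · intro a b
    obtain ⟨a, rfl⟩ := hs a
    obtain ⟨b, rfl⟩ := hs b
    rw [← map_mul, qrk_mk, qrk_mk]
    exact urk_mul_left a b
  · intro a b
    obtain ⟨a, rfl⟩ := hs a
    obtain ⟨b, rfl⟩ := hs b
    rw [← map_mul, qrk_mk, qrk_mk]
    exact urk_mul_right a b
  · intro a b c
    obtain ⟨a, rfl⟩ := hs a
    obtain ⟨b, rfl⟩ := hs b
    obtain ⟨c, rfl⟩ := hs c
    rw [← map_mul, ← map_mul, ← map_mul, qrk_mk, qrk_mk, qrk_mk, qrk_mk]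
    exact urk_frobenius a b c

variable {K : Type*} [Field K] [Algebra K D] {M : Type*} [Ring M] [Algebra K M] {N : M → ℝ}
  {A : ℕ → Subalgebra K M}

variable (D) in
/-- Entrywise inclusion. -/
def levelHom (φ : ∀ n, (A n) ≃ₐ[K] Matrix (Fin (2 ^ n)) (Fin (2 ^ n)) K) (n : ℕ) :
    A n →ₐ[K] Matrix (Fin (2 ^ n)) (Fin (2 ^ n)) D :=
  (AlgHom.mapMatrix (Algebra.ofId K D)).comp (φ n).toAlgHom

lemma rk_levelHom (hN : IsPseudoRankFunction N)
    (φ : ∀ n, (A n) ≃ₐ[K] Matrix (Fin (2 ^ n)) (Fin (2 ^ n)) K) (n : ℕ) (a : A n) :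
    (rk (levelHom D φ n a) : ℝ) / (2 ^ n : ℕ) = N a := by
  have h1 := pseudoRank_eq_rk (by positivity) ((nrk_pseudo (D := D) n).comp
    (AlgHom.mapMatrix (m := Fin (2 ^ n)) (Algebra.ofId K D)).toRingHom) (φ n a)
  have h2 := rank_towerHom hN φ n (φ n a)
  rw [towerHom_apply] at h2
  rw [h2, ← h1]
  rfl

lemma levelHom_commute (φ : ∀ n, (A n) ≃ₐ[K] Matrix (Fin (2 ^ n)) (Fin (2 ^ n)) K) (n : ℕ)
    (a : A n) (d : D) : Commute (Matrix.scalar (Fin (2 ^ n)) d) (levelHom D φ n a) := by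
  rw [Matrix.scalar_commute_iff]
  ext i j
  exact (Algebra.commutes (φ n a i j) d).symm

variable (D) in
/-- Product of the level maps. -/
def prodHom (φ : ∀ n, (A n) ≃ₐ[K] Matrix (Fin (2 ^ n)) (Fin (2 ^ n)) K)  :
    (∀ n, A n) →ₐ[K] ProdMat D where
  toFun a k := levelHom D φ k (a k)
  map_one' := by ext1 k; simp
  map_mul' a b := by ext1 k; simp
  map_zero' := by ext1 k; simp
  map_add' a b := by ext1 k; simp
  commutes' c := by ext1 k; simp

/-- `a` is an approximating sequence of `m`. -/
def Approx (N : M → ℝ) (m : M) (a : ∀ n, A n) : Prop :=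
  Tendsto (fun k => N ((a k : M) - m)) atTop (𝓝 0)

lemma exists_Approx (hN : IsPseudoRankFunction N) (hchain : ∀ n, A n ≤ A (n + 1))
    (hdense : RankDense N (⋃ n, (A n : Set M))) (m : M) : ∃ a : ∀ n, A n, Approx N m a := by
  have : ∀ k : ℕ, ∃ a : A k, ∀ b : A k, N ((a : M) - m) ≤ N ((b : M) - m) + 1 / ((k : ℝ) + 1) := by
    intro k
    have hlt : sInf (Set.range fun b : A k => N ((b : M) - m)) <
        sInf (Set.range fun b : A k => N ((b : M) - m)) + 1 / ((k : ℝ) + 1) := by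
      have : (0 : ℝ) < 1 / ((k : ℝ) + 1) := by positivity
      linarith
    obtain ⟨_, ⟨a, rfl⟩, ha⟩ := exists_lt_of_csInf_lt (Set.range_nonempty _) hlt
    refine ⟨a, fun b => ha.le.trans ?_⟩
    gcongr
    apply csInf_le
    · exact ⟨0, by rintro _ ⟨b, rfl⟩; exact hN.nonneg _⟩
    · exact ⟨b, rfl⟩
  choose a ha using this
  refine ⟨a, ?_⟩
  rw [Approx, Metric.tendsto_atTop]
  intro ε hε
  obtain ⟨y, hy, hyε⟩ := hdense m (ε / 2) (by linarith)
  obtain ⟨n0, hn0⟩ := Set.mem_iUnion.1 hy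
  obtain ⟨n1, hn1⟩ := exists_nat_one_div_lt (show 0 < ε / 2 by linarith)
  refine ⟨max n0 n1, fun k hk => ?_⟩
  rw [Real.dist_eq, sub_zero, abs_of_nonneg (hN.nonneg _)]
  have h1 := ha k ⟨y, monotone_nat_of_le_succ hchain ((le_max_left _ _).trans hk) hn0⟩
  have h2 : 1 / ((k : ℝ) + 1) ≤ 1 / ((n1 : ℝ) + 1) :=
    Nat.one_div_le_one_div ((le_max_right _ _).trans hk)
  rw [hN.map_sub_comm m y] at hyε
  have h3 : N ((⟨y, monotone_nat_of_le_succ hchain ((le_max_left _ _).trans hk) hn0⟩ : A k) - m)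
    = N (y - m) := rfl
  linarith

lemma Approx.add (hN : IsPseudoRankFunction N) {m m' : M} {a a' : ∀ n, A n}
    (h : Approx N m a) (h' : Approx N m' a') : Approx N (m + m') (a + a') := by
  have := Tendsto.add h h'
  rw [add_zero] at this
  refine squeeze_zero (fun k => hN.nonneg _) (fun k => ?_) this
  have h1 : ((a + a') k : M) - (m + m') = ((a k : M) - m) + ((a' k : M) - m') := by
    simp only [Pi.add_apply, Subalgebra.coe_add]; abel
  rw [h1]
  exact hN.subadditive _ _

lemma Approx.mul (hN : IsPseudoRankFunction N) {m m' : M} {a a' : ∀ n, A n}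
    (h : Approx N m a) (h' : Approx N m' a') : Approx N (m * m') (a * a') := by
  have := Tendsto.add h h'
  rw [add_zero] at this
  refine squeeze_zero (fun k => hN.nonneg _) (fun k => ?_) this
  have h1 : ((a * a') k : M) - (m * m') = ((a k : M) - m) * a' k + m * ((a' k : M) - m') := by
    simp only [Pi.mul_apply, Subalgebra.coe_mul]; noncomm_ring
  rw [h1]
  exact (hN.subadditive _ _).trans (add_le_add (hN.mul_le_left _ _) (hN.mul_le_right _ _))

lemma Approx.algMap (hN : IsPseudoRankFunction N) (c : K) :
    Approx N (algebraMap K M c) (algebraMap K (∀ n, A n) c) := by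
  have : (fun k => N ((algebraMap K (∀ n, A n) c k : M) - algebraMap K M c)) = fun _ => 0 := by
    funext k
    simp [hN.map_zero]
  rw [Approx, this]
  exact tendsto_const_nhds

lemma Approx.mk_eq (hN : IsPseudoRankFunction N)
    (φ : ∀ n, (A n) ≃ₐ[K] Matrix (Fin (2 ^ n)) (Fin (2 ^ n)) K)
    {m : M} {a a' : ∀ n, A n}
    (h : Approx N m a) (h' : Approx N m a') :
    Ideal.Quotient.mk (nullIdeal D) (prodHom D φ a) =
      Ideal.Quotient.mk (nullIdeal D) (prodHom D φ a') := by
  rw [Ideal.Quotient.mk_eq_mk_iff_sub_mem, mem_nullIdeal, ← map_sub]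
  apply ulim_eq
  have h0 := Tendsto.add h h'
  rw [add_zero] at h0
  refine squeeze_zero (fun k => (nrk_pseudo k).nonneg _) (fun k => ?_) h0
  have h1 : nrk (prodHom D φ (a - a')) k = N ((a k : M) - (a' k : M)) :=
    rk_levelHom hN φ k ((a - a') k)
  rw [h1]
  have h2 := hN.dist_triangle (a k : M) m (a' k)
  rwa [hN.map_sub_comm m] at h2

lemma exists_pseudoRank_tensor (hN : IsPseudoRankFunction N) (hchain : ∀ n, A n ≤ A (n + 1))
    (hdense : RankDense N (⋃ n, (A n : Set M)))
    (φ : ∀ n, (A n) ≃ₐ[K] Matrix (Fin (2 ^ n)) (Fin (2 ^ n)) K) :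
    ∃ S : D ⊗[K] M → ℝ, IsPseudoRankFunction S := by
  choose α hα using exists_Approx hN hchain hdense
  have key : ∀ (m : M) (a : ∀ n, A n), Approx N m a →
      Ideal.Quotient.mk (nullIdeal D) (prodHom D φ (α m)) =
      Ideal.Quotient.mk (nullIdeal D) (prodHom D φ a) := fun m a h => (hα m).mk_eq hN φ h
  let θ : M →ₐ[K] ProdMat D ⧸ nullIdeal D := AlgHom.ofLinearMap
    { toFun := fun m => Ideal.Quotient.mk (nullIdeal D) (prodHom D φ (α m))
      map_add' := fun m m' => by
        rw [key _ _ ((hα m).add hN (hα m')), map_add, map_add]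
      map_smul' := fun c m => by
        have := (Approx.algMap (A := A) hN c).mul hN (hα m)
        rw [← Algebra.smul_def] at this
        rw [key _ _ this, map_mul, map_mul, AlgHom.commutes, RingHom.id_apply, Algebra.smul_def]
        rfl }
    (by
      have := Approx.algMap (A := A) hN (1 : K)
      rw [map_one, map_one] at this
      change Ideal.Quotient.mk (nullIdeal D) (prodHom D φ (α 1)) = 1
      rw [key _ _ this, map_one, map_one])
    (fun m m' => by
      change Ideal.Quotient.mk (nullIdeal D) (prodHom D φ (α (m * m'))) =
        Ideal.Quotient.mk (nullIdeal D) (prodHom D φ (α m)) *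
        Ideal.Quotient.mk (nullIdeal D) (prodHom D φ (α m'))
      rw [key _ _ ((hα m).mul hN (hα m')), map_mul, map_mul])
  let δ : D →ₐ[K] ProdMat D ⧸ nullIdeal D := (Ideal.Quotient.mkₐ K (nullIdeal D)).comp
    (AlgHom.pi fun k => Matrix.scalarAlgHom (Fin (2 ^ k)) K)
  let Φ : D ⊗[K] M →ₐ[K] ProdMat D ⧸ nullIdeal D := Algebra.TensorProduct.lift δ θ (by
    intro d m
    have h : Commute (fun k => Matrix.scalar (Fin (2 ^ k)) d : ProdMat D) (prodHom D φ (α m)) := by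
      funext k
      exact levelHom_commute φ k (α m k) d
    exact h.map (Ideal.Quotient.mk (nullIdeal D)))
  exact ⟨fun x => qrk (Φ x), qrk_pseudo.comp Φ.toRingHom⟩

end Ultra

/-! ### Assembling everything -/

section Final

variable {D : Type*} [DivisionRing D] {K : Type*} [Field K] [Algebra K D]
  {M : Type*} [Ring M] [Algebra K M] {N : M → ℝ} {A : ℕ → Subalgebra K M}

variable (D) in
/-- The embedding of `M_{2^n}(D)` into `D ⊗ M`. -/
def bigHom (φ : ∀ n, (A n) ≃ₐ[K] Matrix (Fin (2 ^ n)) (Fin (2 ^ n)) K) (n : ℕ) :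
    Matrix (Fin (2 ^ n)) (Fin (2 ^ n)) D →ₐ[K] D ⊗[K] M :=
  (Algebra.TensorProduct.map (AlgHom.id K D) (towerHom φ n)).comp
    (matrixEquivTensor (Fin (2 ^ n)) K D).toAlgHom

lemma tmul_mem_range (φ : ∀ n, (A n) ≃ₐ[K] Matrix (Fin (2 ^ n)) (Fin (2 ^ n)) K) (n : ℕ)
    (d : D) {a : M} (ha : a ∈ A n) : d ⊗ₜ[K] a ∈ (bigHom D φ n).range := by
  refine ⟨(matrixEquivTensor (Fin (2 ^ n)) K D).symm (d ⊗ₜ φ n ⟨a, ha⟩), ?_⟩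
  have h := towerHom_apply φ n ⟨a, ha⟩
  change Algebra.TensorProduct.map (AlgHom.id K D) (towerHom φ n)
    (matrixEquivTensor (Fin (2 ^ n)) K D
      ((matrixEquivTensor (Fin (2 ^ n)) K D).symm (d ⊗ₜ φ n ⟨a, ha⟩))) = _
  rw [AlgEquiv.apply_symm_apply, Algebra.TensorProduct.map_tmul, h]
  rfl

lemma range_mono (hchain : ∀ n, A n ≤ A (n + 1))
    (φ : ∀ n, (A n) ≃ₐ[K] Matrix (Fin (2 ^ n)) (Fin (2 ^ n)) K) {n m : ℕ} (hnm : n ≤ m) :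
    (bigHom D φ n).range ≤ (bigHom D φ m).range := by
  rintro _ ⟨z, rfl⟩
  change Algebra.TensorProduct.map (AlgHom.id K D) (towerHom φ n)
    (matrixEquivTensor (Fin (2 ^ n)) K D z) ∈ _
  induction matrixEquivTensor (Fin (2 ^ n)) K D z using TensorProduct.induction_on with
  | zero => rw [map_zero]; exact zero_mem _
  | tmul d x =>
    rw [Algebra.TensorProduct.map_tmul]
    exact tmul_mem_range φ m _ (monotone_nat_of_le_succ hchain hnm (towerHom_mem φ n x))
  | add x y hx hy => rw [map_add]; exact add_mem hx hy

lemma eq_on_range {S S' : D ⊗[K] M → ℝ} (hS : IsPseudoRankFunction S)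
    (hS' : IsPseudoRankFunction S')
    (φ : ∀ n, (A n) ≃ₐ[K] Matrix (Fin (2 ^ n)) (Fin (2 ^ n)) K) (n : ℕ) {y : D ⊗[K] M}
    (hy : y ∈ (bigHom D φ n).range) : S y = S' y := by
  obtain ⟨z, rfl⟩ := hy
  exact (pseudoRank_eq_rk (by positivity) (hS.comp (bigHom D φ n).toRingHom) z).trans
    (pseudoRank_eq_rk (by positivity) (hS'.comp (bigHom D φ n).toRingHom) z).symm

lemma rank_one_tmul (hN : IsRankFunction N) (hc : RankComplete N)
    (hchain : ∀ n, A n ≤ A (n + 1)) (hdense : RankDense N (⋃ n, (A n : Set M)))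
    (φ : ∀ n, (A n) ≃ₐ[K] Matrix (Fin (2 ^ n)) (Fin (2 ^ n)) K)
    {S : D ⊗[K] M → ℝ} (hS : IsPseudoRankFunction S) (m : M) :
    S ((1 : D) ⊗ₜ[K] m) = N m := by
  have hN' : IsPseudoRankFunction (fun m : M => S ((1 : D) ⊗ₜ[K] m)) :=
    hS.comp (Algebra.TensorProduct.includeRight : M →ₐ[K] D ⊗[K] M).toRingHom
  refine pseudoRank_eq_of_dense (B := towerUnion A) hN hc ?_ (tower_reg hchain φ)
    (tower_cmp hN.1 hchain φ) (tower_val hN.1 hchain φ) hN' ?_ m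
  · rw [coe_towerUnion hchain]; exact hdense
  · intro x hx
    obtain ⟨n, hn⟩ := (mem_towerUnion hchain).1 hx
    have h1 := rank_towerHom hN.1 φ n (φ n ⟨x, hn⟩)
    have h2 := rank_towerHom hN' φ n (φ n ⟨x, hn⟩)
    rw [towerHom_apply] at h1 h2
    exact h2.trans h1.symm

lemma exists_approx_tensor (hN : IsRankFunction N) (hc : RankComplete N)
    (hchain : ∀ n, A n ≤ A (n + 1)) (hdense : RankDense N (⋃ n, (A n : Set M)))
    (φ : ∀ n, (A n) ≃ₐ[K] Matrix (Fin (2 ^ n)) (Fin (2 ^ n)) K) (x : D ⊗[K] M) :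
    ∀ ε : ℝ, 0 < ε → ∃ n, ∃ y ∈ (bigHom D φ n).range,
      y ∈ Subring.closure {x : D ⊗[K] M | ∃ d : D, ∃ a ∈ ⋃ n, (A n : Set M), x = d ⊗ₜ[K] a} ∧
      ∀ S : D ⊗[K] M → ℝ, IsPseudoRankFunction S → S (x - y) < ε := by
  induction x using TensorProduct.induction_on with
  | zero =>
    intro ε hε
    refine ⟨0, 0, zero_mem _, zero_mem _, fun S hS => ?_⟩
    rw [sub_zero, hS.map_zero]
    exact hε
  | tmul d m =>
    intro ε hε
    obtain ⟨a, ha, hlt⟩ := hdense m ε hε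
    obtain ⟨n, hn⟩ := Set.mem_iUnion.1 ha
    refine ⟨n, d ⊗ₜ a, tmul_mem_range φ n d hn, Subring.subset_closure ⟨d, a, ha, rfl⟩,
      fun S hS => ?_⟩
    have h : d ⊗ₜ[K] m - d ⊗ₜ[K] a = (d ⊗ₜ[K] (1 : M)) * ((1 : D) ⊗ₜ[K] (m - a)) := by
      rw [Algebra.TensorProduct.tmul_mul_tmul, mul_one, one_mul, TensorProduct.tmul_sub]
    rw [h]
    refine (hS.mul_le_right _ _).trans_lt ?_
    rw [rank_one_tmul hN hc hchain hdense φ hS]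
    exact hlt
  | add x x' hx hx' =>
    intro ε hε
    obtain ⟨n, y, hy, hyc, h⟩ := hx (ε / 2) (by linarith)
    obtain ⟨n', y', hy', hyc', h'⟩ := hx' (ε / 2) (by linarith)
    refine ⟨max n n', y + y', add_mem (range_mono hchain φ (le_max_left _ _) hy)
      (range_mono hchain φ (le_max_right _ _) hy'), add_mem hyc hyc', fun S hS => ?_⟩
    have h3 : x + x' - (y + y') = (x - y) + (x' - y') := by abel
    rw [h3]
    have h4 := hS.subadditive (x - y) (x' - y')
    have h5 := h S hS
    have h6 := h' S hS
    linarith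

end Final

/-- **Lemma 3.1** (Ara–Claramunt). For a division ring `D` with center `K`, the simple `D`-ring
`D ⊗_K M_K` has exactly one rank function `S`, and the subring `D ⊗_K (lim_n M_{2^n}(K))` is
dense in `D ⊗_K M_K` with respect to the `S`-metric. -/
theorem statement5 (D : Type) [DivisionRing D] (K : Type) [Field K] [Algebra K D]
    (hcenter : Set.range (algebraMap K D) = (Subring.center D : Set D))
    (M : Type) [Ring M] [Algebra K M] (NM : M → ℝ)
    (hNM : IsRankFunction NM) (hcomplete : RankComplete NM)
    (A : ℕ → Subalgebra K M) (hchain : ∀ n, A n ≤ A (n + 1))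
    (hiso : ∀ n, Nonempty ((A n) ≃ₐ[K] Matrix (Fin (2 ^ n)) (Fin (2 ^ n)) K))
    (hdense : RankDense NM (⋃ n, (A n : Set M))) :
    IsSimpleRing (D ⊗[K] M) ∧
      (∃! S : D ⊗[K] M → ℝ, IsRankFunction S) ∧
      ∀ S : D ⊗[K] M → ℝ, IsRankFunction S →
        RankDense S (Subring.closure
          {x : D ⊗[K] M | ∃ d : D, ∃ a ∈ ⋃ n, (A n : Set M), x = d ⊗ₜ[K] a} : Set (D ⊗[K] M)) := by
  have φ : ∀ n, (A n) ≃ₐ[K] Matrix (Fin (2 ^ n)) (Fin (2 ^ n)) K := fun n => (hiso n).some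
  have hM : IsSimpleRing M := isSimpleRing_of_dense (B := towerUnion A) hNM hcomplete
    (by rw [coe_towerUnion hchain]; exact hdense) (tower_reg hchain φ)
    (tower_cmp hNM.1 hchain φ) (tower_val hNM.1 hchain φ) (tower_sim hchain φ)
  have hT : IsSimpleRing (D ⊗[K] M) := isSimpleRing_tensor hcenter
  have happ := exists_approx_tensor (D := D) hNM hcomplete hchain hdense φ
  refine ⟨hT, ?_, ?_⟩
  · obtain ⟨S, hS⟩ := exists_pseudoRank_tensor (D := D) hNM.1 hchain hdense φ
    refine ⟨S, hS.isRankFunction, fun S' hS' => ?_⟩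
    funext x
    apply eq_of_abs_sub_le_all
    intro ε hε
    obtain ⟨n, y, hy, -, h⟩ := happ x (ε / 2) (by linarith)
    have h1 := (hS'.1.abs_sub_le x y).trans (h S' hS'.1).le
    have h2 := (hS.abs_sub_le x y).trans (h S hS).le
    have h3 := eq_on_range hS hS'.1 φ n hy
    rw [abs_le] at *
    constructor <;> linarith [h1.1, h1.2, h2.1, h2.2]
  · intro S hS x ε hε
    obtain ⟨n, y, -, hy, h⟩ := happ x ε hε
    exact ⟨y, hy, h S hS.1⟩

end AraClaramunt
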